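/- arXiv:1901.10929 — 2 statements merged into one kernel-verified Lean document; each statement's English description precedes it below -/
import Mathlib

section
/- (Generalised twelve-point theorem.) Let r ≥ 1 and let P = (v₁, …, v_k) (k ≥ 2) be an r-modular sequence. For each i define w_i = (v_i − v_{i−1}) / det(v_{i−1}, v_i) ∈ ℚ² (where v₀ = v_k), set B(P) = Σ_{i=1}^{k} det(v_i, v_{i+1}) and B(P^∨) = Σ_{i=1}^{k} det(w_i, w_{i+1}). Identify each v_i = (x_i, y_i) with the complex number z_i = x_i + y_i·√(−1), and set z_{k+1} = z₁. Then (1/r)·B(P) + r·B(P^∨) = (6/π)·Σ_{i=1}^{k} arg(z_{i+1}/z_i), where arg denotes the principal argument in (−π, π]; that is, (1/r)·B(P) + r·B(P^∨) equals 12 times the winding number of P around the origin. -/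
/-- det(u,v) = u₁v₂ − u₂v₁ for u, v ∈ ℤ². -/
def det2 (u v : ℤ × ℤ) : ℤ := u.1 * v.2 - u.2 * v.1

/-- det(u,v) = u₁v₂ − u₂v₁ for u, v ∈ ℚ². -/
def det2Q (u v : ℚ × ℚ) : ℚ := u.1 * v.2 - u.2 * v.1

/-- The inclusion ℤ² → ℚ². -/
def ratify (u : ℤ × ℤ) : ℚ × ℚ := ((u.1 : ℚ), (u.2 : ℚ))

/-- A vector of ℤ² is primitive if the gcd of its two coordinates is 1. -/
def IsPrimitive (u : ℤ × ℤ) : Prop := Int.gcd u.1 u.2 = 1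

/-!
Let `eᵢ` be the sign of `det(vᵢ, vᵢ₊₁)`. Since `|det(vᵢ₋₁, vᵢ)| = |det(vᵢ, vᵢ₊₁)|`, the vector
`eᵢ₋₁ vᵢ₋₁ + eᵢ vᵢ₊₁` is parallel to the primitive vector `vᵢ`, hence equal to `nᵢ vᵢ` for an
integer `nᵢ`. In terms of these data the left-hand side of the theorem is `3 ∑ eᵢ - ∑ nᵢ`.

The points `σᵢ = eᵢ zᵢ₊₁ / zᵢ` lie in the upper half plane and satisfy `σᵢ = nᵢ - 1 / σᵢ₋₁`. A
continuous branch of `log η`, where `η` is the Dedekind eta function, grows by exactly `πi/12` under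
`z ↦ z + 1` and by `(log z - log i) / 2` under `z ↦ -1/z`. Following it once around the cycle
`σ₁, …, σ_k` gives `∑ (log σᵢ - log i) = -(πi/6) ∑ nᵢ`, whose imaginary part computes the sum of the
arguments of the `zᵢ₊₁ / zᵢ = eᵢ σᵢ`.
-/

section LogEta

open Complex hiding eta
open Function.Periodic ModularForm
open UpperHalfPlane hiding I

/-- The logarithm `∑ log (1 - qⁿ)` of Euler's product `∏ (1 - qⁿ)`, `n ≥ 1`, summed over the
principal branches; it is meaningful for `‖q‖ < 1`. -/
noncomputable def logEulerProduct (q : ℂ) : ℂ := ∑' n : ℕ, log (1 - q ^ (n + 1))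

lemma one_sub_pow_succ_mem_slitPlane {q : ℂ} (hq : ‖q‖ < 1) (n : ℕ) :
    1 - q ^ (n + 1) ∈ slitPlane := by
  rw [sub_eq_add_neg]
  refine mem_slitPlane_of_norm_lt_one ?_
  simpa only [norm_neg, norm_pow] using pow_lt_one₀ (norm_nonneg q) hq n.succ_ne_zero

lemma exp_logEulerProduct {q : ℂ} (hq : ‖q‖ < 1) :
    exp (logEulerProduct q) = ∏' n : ℕ, (1 - q ^ (n + 1)) := by
  have hsum : Summable fun n : ℕ ↦ -q ^ (n + 1) := by
    simpa only [pow_succ'] using! ((summable_geometric_of_norm_lt_one hq).mul_left q).neg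
  have hlog : Summable fun n : ℕ ↦ log (1 - q ^ (n + 1)) := by
    simpa only [← sub_eq_add_neg] using summable_log_one_add_of_summable hsum
  exact cexp_tsum_eq_tprod
    (fun n ↦ slitPlane_ne_zero (one_sub_pow_succ_mem_slitPlane hq n)) hlog

lemma continuousOn_logEulerProduct : ContinuousOn logEulerProduct (Metric.ball 0 1) := by
  intro q₀ hq₀
  obtain ⟨ρ, hq₀ρ, hρ⟩ := exists_between (mem_ball_zero_iff.mp hq₀)
  have hρ₀ : 0 ≤ ρ := (norm_nonneg q₀).trans hq₀ρ.le
  have hlim : TendstoUniformlyOn (fun N q ↦ ∑ n ∈ Finset.range N, log (1 - q ^ (n + 1)))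
      logEulerProduct Filter.atTop (Metric.ball 0 ρ) := by
    have hbound (n : ℕ) (q : ℂ) (hq : q ∈ Metric.ball (0 : ℂ) ρ) :
        ‖-q ^ (n + 1)‖ ≤ ρ ^ (n + 1) := by
      rw [norm_neg, norm_pow]
      exact pow_le_pow_left₀ (norm_nonneg q) (mem_ball_zero_iff.mp hq).le _
    simpa only [← sub_eq_add_neg, logEulerProduct] using!
      ((summable_nat_add_iff 1).mpr
        (summable_geometric_of_lt_one hρ₀ hρ)).tendstoUniformlyOn_tsum_nat_log_one_add
        (.of_forall hbound)
  have hcont : ContinuousOn logEulerProduct (Metric.ball 0 ρ) := by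
    refine hlim.continuousOn (.of_forall fun N ↦ continuousOn_finsetSum _ fun n _ ↦ ?_)
    exact ContinuousOn.clog (by fun_prop) fun q hq ↦
      one_sub_pow_succ_mem_slitPlane ((mem_ball_zero_iff.mp hq).trans hρ) n
  exact (hcont.continuousAt
    (Metric.isOpen_ball.mem_nhds (mem_ball_zero_iff.mpr hq₀ρ))).continuousWithinAt

/-- A branch of `log η` on the upper half plane, where `η` is the Dedekind eta function. Euler's
product contributes through `q = exp (2πiz)`, which makes that part exactly `1`-periodic in `z`. -/
noncomputable def logEta (z : ℂ) : ℂ := 2 * Real.pi * I * z / 24 + logEulerProduct (qParam 1 z)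

lemma exp_logEta {z : ℂ} (hz : 0 < z.im) : exp (logEta z) = eta z := by
  rw [logEta, exp_add, exp_logEulerProduct (norm_qParam_lt_one one_pos hz), eta]
  simp only [eta_q, qParam, ofReal_ofNat]

lemma continuousOn_logEta : ContinuousOn logEta upperHalfPlaneSet := by
  refine ContinuousOn.add (by fun_prop) (continuousOn_logEulerProduct.comp (by fun_prop) ?_)
  exact fun z hz ↦ mem_ball_zero_iff.mpr (norm_qParam_lt_one one_pos hz)

lemma logEta_add_intCast (z : ℂ) (n : ℤ) : logEta (z + n) = logEta z + Real.pi * I / 12 * n := by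
  have hper : qParam 1 (z + n) = qParam 1 z :=
    exp_eq_exp_iff_exists_int.mpr ⟨n, by push_cast; ring⟩
  rw [logEta, logEta, hper]
  ring

lemma neg_one_div_im_pos {z : ℂ} (hz : 0 < z.im) : 0 < (-1 / z).im := by
  simpa only [neg_div, one_div, inv_neg] using (UpperHalfPlane.mk z hz).im_inv_neg_coe_pos

lemma eta_neg_one_div {z : ℂ} (hz : 0 < z.im) :
    eta (-1 / z) = exp ((log z - log I) / 2) * eta z := by
  have hz₀ : z ≠ 0 := UpperHalfPlane.ne_zero ⟨z, hz⟩
  have h : eta (-1 / z) = (sqrt I)⁻¹ * (sqrt z * eta z) := eta_comp_eq_csqrt_I_inv hz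
  rw [h, sqrt_eq_exp hz₀, sqrt_eq_exp I_ne_zero, sub_div, exp_sub]
  ring

/-- Both sides are continuous logarithms of `η (-1 / z)`, and they agree at the fixed point `i`. -/
lemma logEta_neg_one_div {z : ℂ} (hz : 0 < z.im) :
    logEta (-1 / z) = logEta z + (log z - log I) / 2 := by
  have hleft : ContinuousOn (fun z ↦ logEta (-1 / z)) upperHalfPlaneSet :=
    continuousOn_logEta.comp
      (continuousOn_const.div continuousOn_id fun z hz ↦ UpperHalfPlane.ne_zero ⟨z, hz⟩)
      fun z hz ↦ neg_one_div_im_pos hz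
  have hright : ContinuousOn (fun z ↦ logEta z + (log z - log I) / 2) upperHalfPlaneSet :=
    continuousOn_logEta.add (((continuousOn_id.clog fun z hz ↦ mem_slitPlane ⟨z, hz⟩).sub
      continuousOn_const).div_const 2)
  refine isCoveringMap_exp.eqOn_of_comp_eqOn (convex_halfSpace_im_gt 0).isPreconnected hleft hright
    (fun z hz ↦ Subtype.ext ?_) (show (I : ℂ) ∈ upperHalfPlaneSet by simp) (by simp) hz
  simp only [Function.comp_apply]
  rw [exp_logEta (neg_one_div_im_pos hz), eta_neg_one_div hz, exp_add, exp_logEta hz, mul_comm]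

variable {ι : Type*} [Fintype ι] (t : Equiv.Perm ι) {σ : ι → ℂ} {n : ι → ℤ}

theorem sum_log_of_eq_neg_one_div_add_intCast (hσ : ∀ i, 0 < (σ i).im)
    (h : ∀ i, σ i = -1 / σ (t i) + n i) :
    ∑ i, (log (σ i) - log I) = -(Real.pi * I / 6) * ∑ i, (n i : ℂ) := by
  have hstep (i : ι) : logEta (σ i) =
      logEta (σ (t i)) + (log (σ (t i)) - log I) / 2 + Real.pi * I / 12 * n i := by
    conv_lhs => rw [h i]
    rw [logEta_add_intCast, logEta_neg_one_div (hσ (t i))]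
  have hsum := Fintype.sum_congr _ _ hstep
  rw [Finset.sum_add_distrib, Finset.sum_add_distrib, Equiv.sum_comp t fun i ↦ logEta (σ i),
    Equiv.sum_comp t fun i ↦ (log (σ i) - log I) / 2, ← Finset.sum_div, ← Finset.mul_sum] at hsum
  linear_combination -2 * hsum

theorem sum_arg_of_eq_neg_one_div_add_intCast (hσ : ∀ i, 0 < (σ i).im)
    (h : ∀ i, σ i = -1 / σ (t i) + n i) :
    ∑ i, (arg (σ i) - Real.pi / 2) = -(Real.pi / 6) * ∑ i, (n i : ℝ) := by
  have him := congrArg Complex.im (sum_log_of_eq_neg_one_div_add_intCast t hσ h)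
  simpa [log_im, ← Int.cast_sum] using him

end LogEta

section Lattice

lemma IsPrimitive.ne_zero {b : ℤ × ℤ} (hb : IsPrimitive b) : b ≠ 0 := by
  rintro rfl
  simp [IsPrimitive] at hb

lemma IsPrimitive.exists_eq_smul_of_det2_eq_zero {b u : ℤ × ℤ} (hb : IsPrimitive b)
    (h : det2 b u = 0) : ∃ n : ℤ, u = n • b := by
  obtain ⟨s, t, hst⟩ := Int.isCoprime_iff_gcd_eq_one.mpr hb
  rw [det2] at h
  refine ⟨s * u.1 + t * u.2, Prod.ext ?_ ?_⟩ <;>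
    simp only [Prod.smul_fst, Prod.smul_snd, smul_eq_mul]
  · linear_combination -u.1 * hst - t * h
  · linear_combination -u.2 * hst + s * h

theorem IsPrimitive.exists_sign_smul_add_sign_smul_eq {a b c : ℤ × ℤ} (hb : IsPrimitive b)
    (h : |det2 a b| = |det2 b c|) :
    ∃ n : ℤ, (det2 a b).sign • a + (det2 b c).sign • c = n • b := by
  refine hb.exists_eq_smul_of_det2_eq_zero ?_
  have hexpand : det2 b ((det2 a b).sign • a + (det2 b c).sign • c) =
      (det2 b c).sign * det2 b c - (det2 a b).sign * det2 a b := by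
    generalize (det2 a b).sign = e, (det2 b c).sign = f
    simp only [det2, Prod.fst_add, Prod.snd_add, Prod.smul_fst, Prod.smul_snd, smul_eq_mul]
    ring
  rw [hexpand, Int.sign_mul_self_eq_abs, Int.sign_mul_self_eq_abs, h, sub_self]

/-- The vector of the dual polygon attached to an edge from `a` to `b`: with `a = vᵢ₋₁` and `b = vᵢ`
it is the `wᵢ` of the twelve-point theorem. -/
def dualEdge (a b : ℤ × ℤ) : ℚ × ℚ := (det2 a b : ℚ)⁻¹ • (ratify b - ratify a)

lemma det2Q_dualEdge (a b c : ℤ × ℤ) : det2Q (dualEdge a b) (dualEdge b c) =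
    (det2 a b : ℚ)⁻¹ * (det2 b c : ℚ)⁻¹ * (det2 a b + det2 b c - det2 a c) := by
  simp only [dualEdge, det2Q, ratify, Prod.smul_fst, Prod.smul_snd, Prod.fst_sub, Prod.snd_sub,
    smul_eq_mul]
  generalize (det2 a b : ℚ)⁻¹ = x, (det2 b c : ℚ)⁻¹ = y
  simp only [det2]
  push_cast
  ring

theorem mul_det2Q_dualEdge {r n : ℤ} {a b c : ℤ × ℤ} (hr : r ≠ 0) (hab : |det2 a b| = r)
    (hbc : |det2 b c| = r) (hn : (det2 a b).sign • a + (det2 b c).sign • c = n • b) :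
    r * det2Q (dualEdge a b) (dualEdge b c) = (det2 a b).sign + (det2 b c).sign - n := by
  have hac : (det2 b c).sign * det2 a c = n * det2 a b := by
    have hfst := congrArg Prod.fst hn
    have hsnd := congrArg Prod.snd hn
    simp only [Prod.fst_add, Prod.snd_add, Prod.smul_fst, Prod.smul_snd, smul_eq_mul] at hfst hsnd
    generalize (det2 a b).sign = e, (det2 b c).sign = f at hfst hsnd ⊢
    simp only [det2]
    linear_combination a.1 * hsnd - a.2 * hfst
  have hab₀ : (det2 a b : ℚ) ≠ 0 := by
    rw [Int.cast_ne_zero, ← abs_ne_zero, hab]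
    exact hr
  have hbc₀ : (det2 b c : ℚ) ≠ 0 := by
    rw [Int.cast_ne_zero, ← abs_ne_zero, hbc]
    exact hr
  have hac' : ((det2 b c).sign : ℚ) * det2 a c = n * det2 a b := mod_cast hac
  have hab' : ((det2 a b).sign : ℚ) * det2 a b = r :=
    mod_cast (Int.sign_mul_self_eq_abs _).trans hab
  have hbc' : ((det2 b c).sign : ℚ) * det2 b c = r :=
    mod_cast (Int.sign_mul_self_eq_abs _).trans hbc
  rw [det2Q_dualEdge]
  field_simp
  linear_combination (det2 a c - det2 a b) * hbc' - det2 b c * hab' - det2 b c * hac'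

end Lattice

section SignedRatio

/-- The vector `(x, y)` as the complex number `x + iy`. -/
noncomputable def toComplex : ℤ × ℤ →+ ℂ where
  toFun u := u.1 + u.2 * Complex.I
  map_zero' := by simp
  map_add' u v := by
    simp only [Prod.fst_add, Prod.snd_add, Int.cast_add]
    ring

lemma toComplex_re (u : ℤ × ℤ) : (toComplex u).re = u.1 := by simp [toComplex]

lemma toComplex_im (u : ℤ × ℤ) : (toComplex u).im = u.2 := by simp [toComplex]

lemma toComplex_ne_zero {u : ℤ × ℤ} (hu : u ≠ 0) : toComplex u ≠ 0 := by
  contrapose! hu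
  simpa only [Complex.ext_iff, toComplex_re, toComplex_im, Complex.zero_re, Complex.zero_im,
    Int.cast_eq_zero, Prod.ext_iff, Prod.fst_zero, Prod.snd_zero] using hu

lemma im_toComplex_div (a b : ℤ × ℤ) :
    (toComplex b / toComplex a).im = det2 a b / Complex.normSq (toComplex a) := by
  simp only [Complex.div_im, toComplex_re, toComplex_im, det2, Int.cast_sub, Int.cast_mul]
  ring

/-- The quotient `b / a` of two vectors read as complex numbers, moved into the upper half plane by
the sign of `det(a, b)`. -/
noncomputable def signedRatio (a b : ℤ × ℤ) : ℂ :=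
  (det2 a b).sign * (toComplex b / toComplex a)

lemma im_signedRatio (a b : ℤ × ℤ) :
    (signedRatio a b).im = (|det2 a b| : ℤ) / Complex.normSq (toComplex a) := by
  rw [signedRatio, ← Complex.ofReal_intCast, Complex.im_ofReal_mul, im_toComplex_div,
    ← Int.sign_mul_self_eq_abs, Int.cast_mul, mul_div_assoc]

lemma im_signedRatio_pos {a b : ℤ × ℤ} (h : det2 a b ≠ 0) : 0 < (signedRatio a b).im := by
  have ha : a ≠ 0 := by
    rintro rfl
    simp [det2] at h
  rw [im_signedRatio]
  exact div_pos (mod_cast abs_pos.mpr h) (Complex.normSq_pos.mpr (toComplex_ne_zero ha))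

lemma arg_toComplex_div {a b : ℤ × ℤ} (h : det2 a b ≠ 0) :
    (toComplex b / toComplex a).arg =
      (signedRatio a b).arg - Real.pi / 2 + Real.pi / 2 * (det2 a b).sign := by
  rcases lt_or_gt_of_ne h with hneg | hpos
  · have hratio : signedRatio a b = -(toComplex b / toComplex a) := by
      simp [signedRatio, Int.sign_eq_neg_one_of_neg hneg]
    have him : (toComplex b / toComplex a).im < 0 := by
      simpa only [hratio, Complex.neg_im, Left.neg_pos_iff] using im_signedRatio_pos h
    rw [hratio, Complex.arg_neg_eq_arg_add_pi_of_im_neg him, Int.sign_eq_neg_one_of_neg hneg]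
    push_cast
    ring
  · simp [signedRatio, Int.sign_eq_one_of_pos hpos]

lemma inv_intCast_sign {K : Type*} [DivisionRing K] (d : ℤ) : ((d.sign : K))⁻¹ = d.sign := by
  rcases lt_trichotomy d 0 with h | rfl | h
  · simp [Int.sign_eq_neg_one_of_neg h, inv_neg]
  · simp
  · simp [Int.sign_eq_one_of_pos h]

lemma signedRatio_eq_neg_one_div_add {a b c : ℤ × ℤ} {n : ℤ} (hb : b ≠ 0)
    (hn : (det2 a b).sign • a + (det2 b c).sign • c = n • b) :
    signedRatio b c = -1 / signedRatio a b + n := by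
  have hb₀ := toComplex_ne_zero hb
  have hn' := congrArg toComplex hn
  rw [map_add, map_zsmul, map_zsmul, map_zsmul] at hn'
  have hinv : -1 / signedRatio a b = -((det2 a b).sign * toComplex a / toComplex b) := by
    rw [signedRatio, neg_div, one_div, mul_inv, inv_div, inv_intCast_sign, mul_div_assoc]
  simp only [zsmul_eq_mul] at hn'
  rw [hinv, signedRatio]
  field_simp
  linear_combination hn'

end SignedRatio

section ClosedPolygon

variable {ι : Type*} [Fintype ι] (s : Equiv.Perm ι) {v : ι → ℤ × ℤ} {n : ι → ℤ}

theorem sum_arg_toComplex_div (hv : ∀ i, v i ≠ 0) (hdet : ∀ i, det2 (v i) (v (s i)) ≠ 0)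
    (hn : ∀ i, (det2 (v (s.symm i)) (v i)).sign • v (s.symm i) +
      (det2 (v i) (v (s i))).sign • v (s i) = n i • v i) :
    ∑ i, (toComplex (v (s i)) / toComplex (v i)).arg =
      Real.pi / 2 * ∑ i, ((det2 (v i) (v (s i))).sign : ℝ) - Real.pi / 6 * ∑ i, (n i : ℝ) := by
  have hcycle := sum_arg_of_eq_neg_one_div_add_intCast s.symm
    (σ := fun i ↦ signedRatio (v i) (v (s i))) (n := n)
    (fun i ↦ im_signedRatio_pos (hdet i)) fun i ↦ by
      simpa only [s.apply_symm_apply] using signedRatio_eq_neg_one_div_add (hv i) (hn i)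
  rw [Fintype.sum_congr _ _ fun i ↦ arg_toComplex_div (hdet i), Finset.sum_add_distrib, hcycle,
    ← Finset.mul_sum]
  ring

theorem mul_sum_det2Q_dualEdge {r : ℤ} (hr : r ≠ 0) (hdet : ∀ i, |det2 (v i) (v (s i))| = r)
    (hn : ∀ i, (det2 (v (s.symm i)) (v i)).sign • v (s.symm i) +
      (det2 (v i) (v (s i))).sign • v (s i) = n i • v i) :
    r * ∑ i, det2Q (dualEdge (v (s.symm i)) (v i)) (dualEdge (v i) (v (s i))) =
      2 * ∑ i, ((det2 (v i) (v (s i))).sign : ℚ) - ∑ i, (n i : ℚ) := by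
  have hdet' (i : ι) : |det2 (v (s.symm i)) (v i)| = r := by
    simpa only [s.apply_symm_apply] using hdet (s.symm i)
  have hshift : ∑ i, ((det2 (v (s.symm i)) (v i)).sign : ℚ) =
      ∑ i, ((det2 (v i) (v (s i))).sign : ℚ) := by
    simpa only [s.apply_symm_apply] using
      Equiv.sum_comp s.symm fun i ↦ ((det2 (v i) (v (s i))).sign : ℚ)
  rw [Finset.mul_sum, Fintype.sum_congr _ _ fun i ↦ mul_det2Q_dualEdge hr (hdet' i) (hdet i) (hn i),
    Finset.sum_sub_distrib, Finset.sum_add_distrib, hshift, two_mul]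

theorem sum_det2_eq_mul_sum_sign {r : ℤ} (hdet : ∀ i, |det2 (v i) (v (s i))| = r) :
    ∑ i, det2 (v i) (v (s i)) = r * ∑ i, (det2 (v i) (v (s i))).sign := by
  rw [Finset.mul_sum]
  exact Fintype.sum_congr _ _ fun i ↦ by rw [← hdet i, mul_comm, Int.sign_mul_abs]

/-- The permutation `s` sends each vertex to the next one, so that the polygon may have several
components. -/
theorem twelve_point_theorem_of_r_modular_sequence_general {r : ℤ} (hr : r ≠ 0)
    (hprim : ∀ i, IsPrimitive (v i)) (hdet : ∀ i, |det2 (v i) (v (s i))| = r) :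
    1 / (r : ℝ) * ((∑ i, det2 (v i) (v (s i)) : ℤ) : ℝ)
        + r * ((∑ i, det2Q (dualEdge (v (s.symm i)) (v i)) (dualEdge (v i) (v (s i))) : ℚ) : ℝ)
      = 6 / Real.pi * ∑ i, (toComplex (v (s i)) / toComplex (v i)).arg := by
  have hr₀ : (r : ℝ) ≠ 0 := mod_cast hr
  have hdet₀ (i : ι) : det2 (v i) (v (s i)) ≠ 0 := abs_ne_zero.mp (hdet i ▸ hr)
  have hdet_symm (i : ι) : |det2 (v (s.symm i)) (v i)| = |det2 (v i) (v (s i))| := by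
    simpa only [s.apply_symm_apply, hdet i] using hdet (s.symm i)
  choose n hn using fun i ↦ (hprim i).exists_sign_smul_add_sign_smul_eq (hdet_symm i)
  have hdual := congrArg (Rat.cast (K := ℝ)) (mul_sum_det2Q_dualEdge s hr hdet hn)
  push_cast at hdual
  rw [sum_det2_eq_mul_sum_sign s hdet, sum_arg_toComplex_div s (fun i ↦ (hprim i).ne_zero) hdet₀ hn]
  push_cast
  rw [hdual]
  field_simp
  ring

end ClosedPolygon

/-- Generalised twelve-point theorem: for an r-modular sequence
P = (v₁,…,v_k) (k ≥ 2), with w_i = (v_i − v_{i−1}) / det(v_{i−1}, v_i),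
B(P) = Σ det(v_i, v_{i+1}) and B(P^∨) = Σ det(w_i, w_{i+1}), and with z_i ∈ ℂ the
complex number corresponding to v_i, we have
(1/r)·B(P) + r·B(P^∨) = (6/π)·Σ arg(z_{i+1}/z_i) = 12·(winding number of P). -/
theorem twelve_point_theorem_of_r_modular_sequence (r : ℤ) (hr : 1 ≤ r)
    (k : ℕ) [NeZero k] (hk : 2 ≤ k)
    (v : ZMod k → ℤ × ℤ)
    (hprim : ∀ i, IsPrimitive (v i))
    (hdet : ∀ i, det2 (v i) (v (i + 1)) = r ∨ det2 (v i) (v (i + 1)) = -r)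
    (w : ZMod k → ℚ × ℚ)
    (hw : ∀ i, w i = ((det2 (v (i - 1)) (v i) : ℤ) : ℚ)⁻¹ • (ratify (v i) - ratify (v (i - 1))))
    (z : ZMod k → ℂ)
    (hz : ∀ i, z i = ((v i).1 : ℂ) + ((v i).2 : ℂ) * Complex.I) :
    (1 / (r : ℝ)) * ((∑ i : ZMod k, det2 (v i) (v (i + 1)) : ℤ) : ℝ)
        + (r : ℝ) * ((∑ i : ZMod k, det2Q (w i) (w (i + 1)) : ℚ) : ℝ)
      = 6 / Real.pi * ∑ i : ZMod k, (z (i + 1) / z i).arg := by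
  obtain rfl : z = fun i ↦ toComplex (v i) := funext hz
  have h := twelve_point_theorem_of_r_modular_sequence_general (Equiv.addRight 1)
    (by lia : r ≠ 0) hprim fun i ↦ (abs_eq (by lia)).mpr (hdet i)
  simpa [hw, dualEdge, sub_eq_add_neg] using h
end

section
/- Let r be a positive integer and let P be a Fano polygon with exactly 3 vertices v₁, v₂, v₃ listed in counterclockwise cyclic order, such that det(v_i, v_{i+1}) = r for every i (indices modulo 3). Then there exist M ∈ GL₂(ℤ) and an integer s with gcd(r,s) = gcd(r,s−1) = 1 such that M maps the vertex set {v₁, v₂, v₃} onto {(0,1), (−r,s−1), (r,−s)}. -/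
/-- `v : ZMod k → ℤ × ℤ` lists, in counterclockwise cyclic order, the vertices of a
Fano polygon: a convex lattice polygon (so k ≥ 3 and the points are in strictly
convex position, every other vertex lying strictly to the left of each directed
edge v_i → v_{i+1}) whose vertices are primitive and whose interior contains the
origin (the origin lies strictly to the left of each directed edge, which is
exactly 0 < det(v_i, v_{i+1})). -/
def IsFanoCCW {k : ℕ} (v : ZMod k → ℤ × ℤ) : Prop :=
  3 ≤ k ∧ (∀ i, IsPrimitive (v i)) ∧ (∀ i, 0 < det2 (v i) (v (i + 1))) ∧
    ∀ i j : ZMod k, j ≠ i → j ≠ i + 1 → 0 < det2 (v (i + 1) - v i) (v j - v i)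

/-- The action of an integer 2×2 matrix on ℤ². -/
def mApply (M : Matrix (Fin 2) (Fin 2) ℤ) (u : ℤ × ℤ) : ℤ × ℤ :=
  (M 0 0 * u.1 + M 0 1 * u.2, M 1 0 * u.1 + M 1 1 * u.2)

theorem det2_smul_add_det2_smul_add_det2_smul (u v w : ℤ × ℤ) :
    det2 v w • u + det2 w u • v + det2 u v • w = 0 := by
  ext <;> simp [det2] <;> ring

theorem add_add_eq_zero_of_det2_eq {u v w : ℤ × ℤ} {r : ℤ} (hr : r ≠ 0)
    (huv : det2 u v = r) (hvw : det2 v w = r) (hwu : det2 w u = r) : u + v + w = 0 := by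
  have hsmul : r • (u + v + w) = 0 := by
    simpa only [huv, hvw, hwu, ← smul_add] using det2_smul_add_det2_smul_add_det2_smul u v w
  exact (smul_eq_zero.mp hsmul).resolve_left hr

theorem mApply_add (M : Matrix (Fin 2) (Fin 2) ℤ) (u v : ℤ × ℤ) :
    mApply M (u + v) = mApply M u + mApply M v := by
  ext <;> simp [mApply] <;> ring

theorem mApply_neg (M : Matrix (Fin 2) (Fin 2) ℤ) (u : ℤ × ℤ) :
    mApply M (-u) = -mApply M u := by
  ext <;> simp [mApply] <;> ring

theorem det2_mApply (M : Matrix (Fin 2) (Fin 2) ℤ) (u v : ℤ × ℤ) :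
    det2 (mApply M u) (mApply M v) = M.det * det2 u v := by
  simp only [det2, mApply, Matrix.det_fin_two]
  ring

theorem IsPrimitive.exists_det2_eq_one {u : ℤ × ℤ} (hu : IsPrimitive u) :
    ∃ w, det2 u w = 1 := by
  obtain ⟨a, b, hab⟩ := Int.isCoprime_iff_gcd_eq_one.mpr hu
  refine ⟨(-b, a), ?_⟩
  rw [det2]
  linear_combination hab

theorem IsPrimitive.of_isUnit_det2 {u w : ℤ × ℤ} (h : IsUnit (det2 u w)) : IsPrimitive u := by
  obtain ⟨c, hc⟩ := h.exists_left_inv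
  refine Int.isCoprime_iff_gcd_eq_one.mp ⟨c * w.2, -(c * w.1), ?_⟩
  rw [det2] at hc
  linear_combination hc

theorem IsPrimitive.exists_mApply_eq_zero_one {u : ℤ × ℤ} (hu : IsPrimitive u) :
    ∃ M : Matrix (Fin 2) (Fin 2) ℤ, M.det = 1 ∧ mApply M u = (0, 1) := by
  obtain ⟨w, hw⟩ := hu.exists_det2_eq_one
  -- This is the matrix of `x ↦ (-det2 u x, det2 x w)`.
  refine ⟨!![u.2, -u.1; w.2, -w.1], ?_, ?_⟩
  · rw [Matrix.det_fin_two_of, ← hw, det2]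
    ring
  · rw [← hw]
    ext <;> simp [mApply, det2] <;> ring

theorem IsPrimitive.mApply {M : Matrix (Fin 2) (Fin 2) ℤ} (hM : IsUnit M.det) {u : ℤ × ℤ}
    (hu : IsPrimitive u) : IsPrimitive (mApply M u) := by
  obtain ⟨w, hw⟩ := hu.exists_det2_eq_one
  refine .of_isUnit_det2 (w := _root_.mApply M w) ?_
  rwa [det2_mApply, hw, mul_one]

theorem range_zmod_three {α : Type*} (f : ZMod 3 → α) : Set.range f = {f 0, f 1, f 2} := by
  have huniv : (Set.univ : Set (ZMod 3)) = {0, 1, 2} := by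
    ext i
    revert i
    decide
  rw [← Set.image_univ, huniv, Set.image_insert_eq, Set.image_pair]

/-- a Fano polygon on 3 vertices all of whose edge cones have
determinant r has vertex set unimodular equivalent to
{(0,1), (−r,s−1), (r,−s)} with gcd(r,s) = gcd(r,s−1) = 1. -/
theorem classification_k_eq_three (r : ℤ) (hr : 0 < r)
    (v : ZMod 3 → ℤ × ℤ)
    (hF : IsFanoCCW v)
    (hdet : ∀ i, det2 (v i) (v (i + 1)) = r) :
    ∃ (M : Matrix (Fin 2) (Fin 2) ℤ) (s : ℤ), IsUnit M.det ∧
      Int.gcd r s = 1 ∧ Int.gcd r (s - 1) = 1 ∧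
      Set.range (fun i => mApply M (v i)) =
        ({(0, 1), (-r, s - 1), (r, -s)} : Set (ℤ × ℤ)) := by
  obtain ⟨-, hprim, -, -⟩ := hF
  have hsum : v 0 + v 1 + v 2 = 0 :=
    add_add_eq_zero_of_det2_eq hr.ne' (hdet 0) (hdet 1) (hdet 2)
  obtain ⟨M, hM, hMv₀⟩ := (hprim 0).exists_mApply_eq_zero_one
  have hunit : IsUnit M.det := hM ▸ isUnit_one
  obtain ⟨s, hMv₁⟩ : ∃ s, mApply M (v 1) = (-r, s - 1) := by
    have hfst : -(mApply M (v 1)).1 = r := by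
      simpa [hMv₀, hM, det2, ← hdet 0] using det2_mApply M (v 0) (v 1)
    exact ⟨(mApply M (v 1)).2 + 1, Prod.ext (by simp [← hfst]) (by simp)⟩
  have hMv₂ : mApply M (v 2) = (r, -s) := by
    rw [eq_neg_of_add_eq_zero_right hsum, mApply_neg, mApply_add, hMv₀, hMv₁]
    simp
  have hprim₁ : IsPrimitive (-r, s - 1) := hMv₁ ▸ (hprim 1).mApply hunit
  have hprim₂ : IsPrimitive (r, -s) := hMv₂ ▸ (hprim 2).mApply hunit
  refine ⟨M, s, hunit, ?_, ?_, ?_⟩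
  · simpa [IsPrimitive] using hprim₂
  · simpa [IsPrimitive] using hprim₁
  · rw [range_zmod_three, hMv₀, hMv₁, hMv₂]
end
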